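/- arXiv:1506.08912 — 8 statements merged into one kernel-verified Lean document; each statement's English description precedes it below -/
import Mathlib

section
/- Let β ≥ 0 be real, let μ be a σ-finite measure on [0,∞), and for each n ∈ ℕ and each α ≥ 0 let φ_n(·,α) be a polynomial of degree n with real coefficients such that ∫_0^∞ φ_j(u,α) φ_k(u,α) u^α dμ(u) = ζ_k(α) δ_{jk} for all j,k ∈ ℕ and all α ≥ 0, where ζ_k(α) ∈ ℝ. Define f_{m,n}(z;β) = z^{m−n} φ_n(z·conj(z); m−n+β) for integers m ≥ n ≥ 0, and f_{m,n}(z;β) = conj(f_{n,m}(z;β)) for m < n. Then for all m,n,s,t ∈ ℕ the iterated integral ∫_0^∞ (1/(2π)) ∫_0^{2π} f_{m,n}(√u e^{iθ};β) · conj(f_{s,t}(√u e^{iθ};β)) dθ · u^β dμ(u) equals ζ_{min(m,n)}(|m−n|+β) δ_{ms} δ_{nt}. -/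
open MeasureTheory

theorem aux_exp_integral (k : ℤ) :
    (∫ θ in (0 : ℝ)..(2 * Real.pi), Complex.exp ((k : ℂ) * Complex.I * θ))
      = if k = 0 then ((2 * Real.pi : ℝ) : ℂ) else 0 := by
  split_ifs with h
  · subst h
    simp
  · have hk : (k : ℂ) * Complex.I ≠ 0 :=
      mul_ne_zero (by exact_mod_cast h) Complex.I_ne_zero
    rw [integral_exp_mul_complex hk]
    have : (k : ℂ) * Complex.I * ((2 * Real.pi : ℝ) : ℂ) = k * (2 * Real.pi * Complex.I) := by
      push_cast; ring
    rw [this, Complex.exp_int_mul_two_pi_mul_I]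
    simp

/-- Orthogonality of the generalized 2D polynomials `f_{m,n}(z;β)` built from a system of
1D orthogonal polynomials `φ_n(·,α)` (the `N = ∞` case, with circle measure `dθ/(2π)`). -/
theorem generalized_2D_orthogonality (β : ℝ) (hβ : 0 ≤ β)
    (μ : Measure ℝ) [SigmaFinite μ]
    (φ : ℕ → ℝ → ℝ → ℝ) (ζ : ℕ → ℝ → ℝ)
    (hpoly : ∀ (n : ℕ) (α : ℝ), 0 ≤ α →
      ∃ p : Polynomial ℝ, p.degree = n ∧ ∀ u : ℝ, φ n u α = p.eval u)
    (horth : ∀ (j k : ℕ) (α : ℝ), 0 ≤ α →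
      ∫ u in Set.Ici (0 : ℝ), φ j u α * φ k u α * u ^ α ∂μ
        = if j = k then ζ k α else 0)
    (f : ℕ → ℕ → ℂ → ℂ)
    (hf₁ : ∀ m n : ℕ, n ≤ m → ∀ z : ℂ,
      f m n z = z ^ (m - n) * ((φ n (Complex.normSq z) ((m : ℝ) - n + β) : ℝ) : ℂ))
    (hf₂ : ∀ m n : ℕ, m < n → ∀ z : ℂ, f m n z = starRingEnd ℂ (f n m z)) :
    ∀ m n s t : ℕ,
      (∫ u in Set.Ici (0 : ℝ),
          (u ^ β : ℝ) •
            ((2 * Real.pi)⁻¹ •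
              ∫ θ in (0 : ℝ)..(2 * Real.pi),
                f m n ((Real.sqrt u : ℂ) * Complex.exp (θ * Complex.I)) *
                  starRingEnd ℂ
                    (f s t ((Real.sqrt u : ℂ) * Complex.exp (θ * Complex.I)))) ∂μ)
        = (if m = s then 1 else 0) * (if n = t then 1 else 0) *
            ((ζ (min m n) (|(m : ℝ) - n| + β) : ℝ) : ℂ) := by
  have key : ∀ m n : ℕ, ∀ u : ℝ, 0 ≤ u → ∀ θ : ℝ,
      f m n ((Real.sqrt u : ℂ) * Complex.exp (θ * Complex.I)) =
        ((Real.sqrt u ^ ((m : ℤ) - n).natAbs * φ (min m n) u (|(m : ℝ) - n| + β) : ℝ) : ℂ) *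
          Complex.exp ((((m : ℤ) - n : ℤ) : ℂ) * Complex.I * θ) := by
    have base : ∀ m n : ℕ, n ≤ m → ∀ u : ℝ, 0 ≤ u → ∀ θ : ℝ,
      f m n ((Real.sqrt u : ℂ) * Complex.exp (θ * Complex.I)) =
        ((Real.sqrt u ^ ((m : ℤ) - n).natAbs * φ (min m n) u (|(m : ℝ) - n| + β) : ℝ) : ℂ) *
          Complex.exp ((((m : ℤ) - n : ℤ) : ℂ) * Complex.I * θ) := by
      intro m n hmn u hu θ
      have h1 : Complex.normSq ((Real.sqrt u : ℂ) * Complex.exp (θ * Complex.I)) = u := by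
        rw [Complex.normSq_eq_norm_sq, norm_mul, Complex.norm_exp_ofReal_mul_I, mul_one,
          Complex.norm_real, Real.norm_eq_abs, sq_abs, Real.sq_sqrt hu]
      obtain ⟨d, rfl⟩ := Nat.exists_eq_add_of_le hmn
      rw [hf₁ _ _ hmn, h1]
      have h2 : |((n + d : ℕ) : ℝ) - n| = ((n + d : ℕ) : ℝ) - n := by
        apply abs_of_nonneg; push_cast; linarith [Nat.cast_nonneg (α := ℝ) d]
      have h3 : (((n + d : ℕ) : ℤ) - n) = d := by push_cast; ring
      rw [h2, h3, min_eq_right hmn, mul_pow, ← Complex.exp_nat_mul]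
      simp only [Nat.add_sub_cancel_left, Int.natAbs_natCast, Complex.ofReal_mul,
        Complex.ofReal_pow, Int.cast_natCast]
      rw [show (d : ℂ) * (θ * Complex.I) = d * Complex.I * θ by ring]
      ring
    intro m n u hu θ
    rcases le_or_gt n m with h | h
    · exact base m n h u hu θ
    · rw [hf₂ m n h, base n m h.le u hu θ, map_mul, Complex.conj_ofReal, ← Complex.exp_conj,
        abs_sub_comm, min_comm, ← Int.natAbs_neg, neg_sub]
      congr 2
      simp only [map_mul, Complex.conj_I, Complex.conj_ofReal, map_intCast]
      push_cast; ring
  intro m n s t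
  have hin : ∀ u ∈ Set.Ici (0 : ℝ), (u ^ β : ℝ) •
            ((2 * Real.pi)⁻¹ •
              ∫ θ in (0 : ℝ)..(2 * Real.pi),
                f m n ((Real.sqrt u : ℂ) * Complex.exp (θ * Complex.I)) *
                  starRingEnd ℂ
                    (f s t ((Real.sqrt u : ℂ) * Complex.exp (θ * Complex.I))))
        = if (m : ℤ) - n = s - t then
            ((φ (min m n) u (|(m : ℝ) - n| + β) * φ (min s t) u (|(m : ℝ) - n| + β)
              * u ^ (|(m : ℝ) - n| + β) : ℝ) : ℂ) else 0 := by
    intro u hu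
    have hu : 0 ≤ u := hu
    have e : ∀ θ : ℝ, f m n ((Real.sqrt u : ℂ) * Complex.exp (θ * Complex.I)) *
                  starRingEnd ℂ
                    (f s t ((Real.sqrt u : ℂ) * Complex.exp (θ * Complex.I)))
        = (((Real.sqrt u ^ ((m : ℤ) - n).natAbs * φ (min m n) u (|(m : ℝ) - n| + β)) *
            (Real.sqrt u ^ ((s : ℤ) - t).natAbs * φ (min s t) u (|(s : ℝ) - t| + β)) : ℝ) : ℂ) *
          Complex.exp (((((m : ℤ) - n) - (s - t) : ℤ) : ℂ) * Complex.I * θ) := by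
      intro θ
      rw [key m n u hu, key s t u hu, map_mul, Complex.conj_ofReal, ← Complex.exp_conj]
      simp only [map_mul, Complex.conj_I, Complex.conj_ofReal, map_intCast]
      rw [mul_mul_mul_comm, ← Complex.exp_add, ← Complex.ofReal_mul]
      congr 2
      push_cast; ring
    simp only [e]
    rw [intervalIntegral.integral_const_mul, aux_exp_integral]
    simp only [sub_eq_zero (a := (m : ℤ) - n)]
    split_ifs with h
    · have hr : (s : ℝ) - t = (m : ℝ) - n := by exact_mod_cast h.symm
      rw [← h, hr, Complex.real_smul, Complex.real_smul, ← Complex.ofReal_mul,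
        ← Complex.ofReal_mul, ← Complex.ofReal_mul]
      congr 1
      have hp : u ^ (|(m : ℝ) - n| + β)
          = Real.sqrt u ^ ((m : ℤ) - n).natAbs * Real.sqrt u ^ ((m : ℤ) - n).natAbs * u ^ β := by
        rw [Real.rpow_add_of_nonneg hu (abs_nonneg _) hβ, ← mul_pow, Real.mul_self_sqrt hu,
          ← Real.rpow_natCast, Nat.cast_natAbs]
        push_cast
        rfl
      rw [hp]
      have := Real.pi_ne_zero
      field_simp
    · simp
  rw [setIntegral_congr_fun measurableSet_Ici hin]
  by_cases h : (m : ℤ) - n = s - t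
  · simp only [h, if_true]
    rw [integral_complex_ofReal, horth _ _ _ (by positivity)]
    by_cases hm : m = s
    · have hn : n = t := by omega
      subst hm hn
      simp
    · have : min m n ≠ min s t := by omega
      simp [hm, this]
  · simp only [h, if_false]
    have : ¬ (m = s ∧ n = t) := by rintro ⟨rfl, rfl⟩; exact h rfl
    by_cases hm : m = s
    · have hn : n ≠ t := fun hn => this ⟨hm, hn⟩
      simp [hn]
    · simp [hm]
end

section
/- For every real β ≥ 0, all integers m > n ≥ 0, every nonzero z ∈ ℂ, and every w ∈ ℂ: (β/z)·Z^{(β)}_{m,n}(z,w) + ∂_z Z^{(β)}_{m,n}(z,w) = (β+m)·Z^{(β)}_{m−1,n}(z,w). (Action of the lowering operator a₁ = β/z + ∂_z on the 2D Laguerre polynomials.) -/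
open Finset

/-- Pochhammer symbol `(a)_j = a (a+1) ⋯ (a+j-1)`. -/
noncomputable def poch (a : ℝ) (j : ℕ) : ℝ := ∏ i ∈ Finset.range j, (a + i)

/-- The generalized 2D Laguerre polynomial `Z^{(β)}_{m,n}(z,w)` (for `m ≥ n`). -/
noncomputable def Zc (β : ℝ) (m n : ℕ) (z w : ℂ) : ℂ :=
  ∑ k ∈ Finset.range (n + 1),
    (((-1 : ℝ) ^ (n - k) * poch (β + 1) m /
        (k.factorial * (n - k).factorial * poch (β + 1) (m - k)) : ℝ) : ℂ) *
      z ^ (m - k) * w ^ (n - k)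

theorem poch_succ_aux (a : ℝ) (j : ℕ) : poch a (j + 1) = poch a j * (a + j) := by
  simp [poch, Finset.prod_range_succ]

theorem poch_pos_aux (a : ℝ) (ha : 0 < a) (j : ℕ) : 0 < poch a j := by
  unfold poch
  exact Finset.prod_pos (fun i _ => by positivity)

/-- Action of the lowering operator `a₁ = β/z + ∂_z` on the 2D Laguerre polynomials:
`(β/z)·Z^{(β)}_{m,n}(z,w) + ∂_z Z^{(β)}_{m,n}(z,w) = (β+m)·Z^{(β)}_{m−1,n}(z,w)`. -/
theorem lowering_a1 (β : ℝ) (hβ : 0 ≤ β) (m n : ℕ) (hmn : n < m) (z : ℂ) (hz : z ≠ 0)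
    (w : ℂ) :
    ((β : ℂ) / z) * Zc β m n z w + deriv (fun z' => Zc β m n z' w) z
      = ((β + m : ℝ) : ℂ) * Zc β (m - 1) n z w := by
  have hd : HasDerivAt (fun z' => Zc β m n z' w)
      (∑ k ∈ Finset.range (n + 1),
        (((-1 : ℝ) ^ (n - k) * poch (β + 1) m /
        (k.factorial * (n - k).factorial * poch (β + 1) (m - k)) : ℝ) : ℂ) *
        (((m - k : ℕ) : ℂ) * z ^ (m - k - 1)) * w ^ (n - k)) z := by
    unfold Zc
    apply HasDerivAt.fun_sum
    intro k _
    exact ((hasDerivAt_pow (m - k) z).const_mul _).mul_const _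
  rw [hd.deriv]
  unfold Zc
  rw [Finset.mul_sum, Finset.mul_sum, ← Finset.sum_add_distrib]
  apply Finset.sum_congr rfl
  intro k hk
  have hk' : k ≤ n := by
    have := Finset.mem_range.mp hk
    omega
  obtain ⟨j, rfl⟩ : ∃ j, m = k + j + 1 := ⟨m - k - 1, by omega⟩
  have e1 : k + j + 1 - k = j + 1 := by omega
  have e2 : k + j + 1 - 1 - k = j := by omega
  have e3 : k + j + 1 - 1 = k + j := by omega
  rw [e2, e1, e3, poch_succ_aux, poch_succ_aux, Nat.add_sub_cancel]
  have hp : poch (β + 1) j ≠ 0 := (poch_pos_aux _ (by linarith) j).ne'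
  have hb : β + 1 + (j : ℝ) ≠ 0 := by positivity
  have hc : ((-1 : ℝ) ^ (n - k) * (poch (β + 1) (k + j) * (β + 1 + ((k + j : ℕ) : ℝ))) /
        (k.factorial * (n - k).factorial * (poch (β + 1) j * (β + 1 + j)))) * (β + 1 + j)
      = (β + ((k + j + 1 : ℕ) : ℝ)) * ((-1 : ℝ) ^ (n - k) * poch (β + 1) (k + j) /
        (k.factorial * (n - k).factorial * poch (β + 1) j)) := by
    have h1 : (k.factorial : ℝ) ≠ 0 := by positivity
    have h2 : ((n - k).factorial : ℝ) ≠ 0 := by positivity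
    push_cast
    field_simp
    ring
  have hcC := congrArg (fun x : ℝ => (x : ℂ)) hc
  simp only [Complex.ofReal_mul _ (β + 1 + (j : ℝ)),
    Complex.ofReal_mul (β + ((k + j + 1 : ℕ) : ℝ)) _] at hcC
  rw [mul_assoc _ (z ^ j) (w ^ (n - k)), ← mul_assoc ((β + ((k + j + 1 : ℕ) : ℝ) : ℝ) : ℂ), ← hcC]
  generalize (((-1 : ℝ) ^ (n - k) * (poch (β + 1) (k + j) * (β + 1 + ((k + j : ℕ) : ℝ))) /
        (k.factorial * (n - k).factorial * (poch (β + 1) j * (β + 1 + j))) : ℝ) : ℂ) = c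
  push_cast
  field_simp
  ring
end

section
/- For every real β ≥ 0, all integers m ≥ n+1 ≥ 1, every nonzero z ∈ ℂ, and every w ∈ ℂ: (β/z)·Z^{(β)}_{m,n}(z,w) + ∂_z Z^{(β)}_{m,n}(z,w) − w·Z^{(β)}_{m,n}(z,w) = (n+1)·Z^{(β)}_{m,n+1}(z,w). (Action of the raising operator a₂† = β/z + ∂_z − w on the 2D Laguerre polynomials.) -/
open Finset

lemma poch_pos_aux_s4 (β : ℝ) (hβ : 0 ≤ β) (j : ℕ) : 0 < poch (β + 1) j := by
  unfold poch
  apply Finset.prod_pos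
  intro i _
  positivity

lemma term_one_aux (β : ℝ) (hβ : 0 ≤ β) (m n k : ℕ) (hk : k ≤ n) (hm : n + 1 ≤ m) :
    (β + ((m - k : ℕ) : ℝ)) * ((-1 : ℝ) ^ (n - k) * poch (β + 1) m /
        (k.factorial * (n - k).factorial * poch (β + 1) (m - k))) =
    ((k : ℝ) + 1) * ((-1 : ℝ) ^ (n + 1 - (k + 1)) * poch (β + 1) m /
        ((k + 1).factorial * (n + 1 - (k + 1)).factorial * poch (β + 1) (m - (k + 1)))) := by
  obtain ⟨a, rfl⟩ := Nat.exists_eq_add_of_le hk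
  obtain ⟨b, rfl⟩ := Nat.exists_eq_add_of_le hm
  have e1 : k + a + 1 + b - k = a + b + 1 := by omega
  have e2 : k + a + 1 + b - (k + 1) = a + b := by omega
  have e3 : k + a + 1 - (k + 1) = a := by omega
  have e4 : k + a - k = a := by omega
  rw [e1, e2, e3, e4]
  have h : poch (β + 1) (a + b + 1) = poch (β + 1) (a + b) * (β + 1 + ((a + b : ℕ) : ℝ)) := by
    unfold poch
    rw [Finset.prod_range_succ]
  have hp := (poch_pos_aux_s4 β hβ (a + b)).ne'
  have hq : β + 1 + ((a + b : ℕ) : ℝ) ≠ 0 := by positivity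
  have hf : (k.factorial : ℝ) ≠ 0 := by positivity
  have hg : (a.factorial : ℝ) ≠ 0 := by positivity
  have hk1 : (k : ℝ) + 1 ≠ 0 := by positivity
  rw [h, Nat.factorial_succ]
  push_cast at hq ⊢
  field_simp
  ring

lemma term_two_aux (P Q : ℝ) (n k : ℕ) (hk : k ≤ n) :
    -((-1 : ℝ) ^ (n - k) * P / (k.factorial * (n - k).factorial * Q)) =
    ((n : ℝ) + 1 - k) * ((-1 : ℝ) ^ (n + 1 - k) * P /
        (k.factorial * (n + 1 - k).factorial * Q)) := by
  obtain ⟨a, rfl⟩ := Nat.exists_eq_add_of_le hk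
  have e3 : k + a + 1 - k = a + 1 := by omega
  have e4 : k + a - k = a := by omega
  rw [e3, e4, Nat.factorial_succ]
  have hf : (k.factorial : ℝ) ≠ 0 := by positivity
  have hg : (a.factorial : ℝ) ≠ 0 := by positivity
  have ha : (a : ℝ) + 1 ≠ 0 := by positivity
  push_cast
  have e5 : (k : ℝ) + a + 1 - k = a + 1 := by ring
  rw [e5, pow_succ]
  by_cases hQ : Q = 0
  · simp [hQ]
  field_simp

/-- Action of the raising operator `a₂† = β/z + ∂_z − w` on the 2D Laguerre polynomials:
`(β/z)·Z^{(β)}_{m,n} + ∂_z Z^{(β)}_{m,n} − w·Z^{(β)}_{m,n} = (n+1)·Z^{(β)}_{m,n+1}`. -/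
theorem raising_a2_dagger (β : ℝ) (hβ : 0 ≤ β) (m n : ℕ) (hmn : n + 1 ≤ m) (z : ℂ)
    (hz : z ≠ 0) (w : ℂ) :
    ((β : ℂ) / z) * Zc β m n z w + deriv (fun z' => Zc β m n z' w) z - w * Zc β m n z w
      = ((n : ℂ) + 1) * Zc β m (n + 1) z w := by
  have hd : deriv (fun z' => Zc β m n z' w) z = ∑ k ∈ Finset.range (n + 1),
      (((-1 : ℝ) ^ (n - k) * poch (β + 1) m /
        (k.factorial * (n - k).factorial * poch (β + 1) (m - k)) : ℝ) : ℂ) *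
      (((m - k : ℕ) : ℂ) * z ^ (m - k - 1)) * w ^ (n - k) := by
    apply HasDerivAt.deriv
    unfold Zc
    apply HasDerivAt.fun_sum
    intro k _
    exact ((hasDerivAt_pow (m - k) z).const_mul _).mul_const _
  rw [hd]
  let c : ℕ → ℂ := fun k => (((-1 : ℝ) ^ (n + 1 - k) * poch (β + 1) m /
        (k.factorial * (n + 1 - k).factorial * poch (β + 1) (m - k)) : ℝ) : ℂ) *
      z ^ (m - k) * w ^ (n + 1 - k)
  have hA : ((β : ℂ) / z) * Zc β m n z w + ∑ k ∈ Finset.range (n + 1),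
      (((-1 : ℝ) ^ (n - k) * poch (β + 1) m /
        (k.factorial * (n - k).factorial * poch (β + 1) (m - k)) : ℝ) : ℂ) *
      (((m - k : ℕ) : ℂ) * z ^ (m - k - 1)) * w ^ (n - k)
      = ∑ k ∈ Finset.range (n + 2), (k : ℂ) * c k := by
    rw [Finset.sum_range_succ' _ (n + 1), Zc, Finset.mul_sum, ← Finset.sum_add_distrib]
    simp only [Nat.cast_zero, zero_mul, add_zero]
    apply Finset.sum_congr rfl
    intro k hk
    have hk' : k ≤ n := by
      have := Finset.mem_range.mp hk
      omega
    have e1 : m - k = (m - (k + 1)) + 1 := by omega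
    have e2 : m - k - 1 = m - (k + 1) := by omega
    have e3 : n + 1 - (k + 1) = n - k := by omega
    have hz1 : z ^ (m - k) = z ^ (m - (k + 1)) * z := by rw [← pow_succ, ← e1]
    simp only [c]
    rw [e2, hz1, Nat.cast_add, Nat.cast_one]
    generalize hX : (((-1 : ℝ) ^ (n - k) * poch (β + 1) m /
        (k.factorial * (n - k).factorial * poch (β + 1) (m - k)) : ℝ) : ℂ) = X
    generalize hY : (((-1 : ℝ) ^ (n + 1 - (k + 1)) * poch (β + 1) m /
        ((k + 1).factorial * (n + 1 - (k + 1)).factorial * poch (β + 1) (m - (k + 1))) : ℝ) : ℂ)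
        = Y
    have h2 : ((β : ℂ) + ((m - k : ℕ) : ℂ)) * X = ((k : ℂ) + 1) * Y := by
      rw [← hX, ← hY]
      have h3 := term_one_aux β hβ m n k hk' hmn
      exact_mod_cast h3
    rw [e3]
    have h4 : (β : ℂ) / z * (X * (z ^ (m - (k + 1)) * z) * w ^ (n - k))
        = β * X * z ^ (m - (k + 1)) * w ^ (n - k) := by
      field_simp
    rw [h4]
    linear_combination (z ^ (m - (k + 1)) * w ^ (n - k)) * h2
  have hB : -(w * Zc β m n z w) = ∑ k ∈ Finset.range (n + 2), ((n : ℂ) + 1 - k) * c k := by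
    rw [Finset.sum_range_succ _ (n + 1), Zc, Finset.mul_sum, ← Finset.sum_neg_distrib]
    simp only [Nat.cast_add, Nat.cast_one, sub_self, zero_mul, add_zero]
    apply Finset.sum_congr rfl
    intro k hk
    have hk' : k ≤ n := by
      have := Finset.mem_range.mp hk
      omega
    have e1 : n + 1 - k = (n - k) + 1 := by omega
    have hw1 : w ^ (n + 1 - k) = w ^ (n - k) * w := by rw [e1, pow_succ]
    simp only [c]
    rw [hw1]
    have h3 := term_two_aux (poch (β + 1) m) (poch (β + 1) (m - k)) n k hk'
    generalize ((-1 : ℝ) ^ (n - k) * poch (β + 1) m /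
        (k.factorial * (n - k).factorial * poch (β + 1) (m - k)) : ℝ) = X at h3 ⊢
    generalize ((-1 : ℝ) ^ (n + 1 - k) * poch (β + 1) m /
        (k.factorial * (n + 1 - k).factorial * poch (β + 1) (m - k)) : ℝ) = Y at h3 ⊢
    have h2 : -(X : ℂ) = ((n : ℂ) + 1 - k) * Y := by exact_mod_cast h3
    linear_combination (z ^ (m - k) * w ^ (n - k) * w) * h2
  rw [sub_eq_add_neg, hA, hB, ← Finset.sum_add_distrib, Zc, Finset.mul_sum]
  apply Finset.sum_congr rfl
  intro k _
  simp only [c]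
  ring
end

section
/- Fix a real β ≥ 0 and integers n > m ≥ 0, and consider G(z,w) := Z^{(β)}_{n,m}(w,z), i.e. the 2D Laguerre polynomial with first index n applied with the variables interchanged. Then for all z, w ∈ ℂ (with w ≠ 0 where division by w occurs): (i) (β/w)·G(z,w) + ∂_w G(z,w) = (n+β)·Z^{(β)}_{n−1,m}(w,z); (ii) w·G(z,w) − ∂_z G(z,w) = Z^{(β)}_{n+1,m}(w,z); (iii) if m ≥ 1, −∂_z G(z,w) = Z^{(β)}_{n,m−1}(w,z); (iv) if n ≥ m+2 or n = m+1 with the raised index still not exceeding n, more precisely whenever n ≥ m+1, (β/w)·G(z,w) + ∂_w G(z,w) − z·G(z,w) = (m+1)·Z^{(β)}_{n,m+1}(w,z). (Ladder operators 𝒜₁, 𝒜₁†, 𝒜₂, 𝒜₂† for the case n > m.) -/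
open Finset

theorem poch_succ' (a : ℝ) (j : ℕ) : poch a (j+1) = poch a j * (a + j) := by
  simp [poch, Finset.prod_range_succ]

theorem poch_ne (β : ℝ) (hβ : 0 ≤ β) (j : ℕ) : ((poch (β+1) j : ℝ) : ℂ) ≠ 0 := by
  have : 0 < poch (β+1) j := by
    unfold poch
    exact Finset.prod_pos (fun i _ => by positivity)
  exact_mod_cast this.ne'

theorem lin_ne (β : ℝ) (hβ : 0 ≤ β) (j : ℕ) : ((β : ℂ) + 1 + (j : ℂ)) ≠ 0 := by
  have : (0:ℝ) < β + 1 + j := by positivity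
  exact_mod_cast this.ne'

noncomputable def trm (β : ℝ) (m n : ℕ) (z w : ℂ) (k : ℕ) : ℂ :=
  (-1 : ℂ) ^ (n - k) * (poch (β + 1) m : ℝ) /
        (k.factorial * (n - k).factorial * (poch (β + 1) (m - k) : ℝ)) *
      z ^ (m - k) * w ^ (n - k)

theorem Zc_eq (β : ℝ) (m n : ℕ) (z w : ℂ) :
    Zc β m n z w = ∑ k ∈ Finset.range (n + 1), trm β m n z w k := by
  unfold Zc trm
  refine Finset.sum_congr rfl fun k _ => ?_
  push_cast
  rfl

theorem trm_dz (β : ℝ) (m n : ℕ) (z w : ℂ) (k : ℕ) :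
    HasDerivAt (fun z' => trm β m n z' w k)
      ((-1 : ℂ) ^ (n - k) * (poch (β + 1) m : ℝ) /
        (k.factorial * (n - k).factorial * (poch (β + 1) (m - k) : ℝ)) *
      (((m - k : ℕ) : ℂ) * z ^ (m - k - 1)) * w ^ (n - k)) z := by
  unfold trm
  exact ((hasDerivAt_pow (m-k) z).const_mul _).mul_const _

theorem trm_dw (β : ℝ) (m n : ℕ) (z w : ℂ) (k : ℕ) :
    HasDerivAt (fun w' => trm β m n z w' k)
      ((-1 : ℂ) ^ (n - k) * (poch (β + 1) m : ℝ) /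
        (k.factorial * (n - k).factorial * (poch (β + 1) (m - k) : ℝ)) *
      z ^ (m - k) * (((n - k : ℕ) : ℂ) * w ^ (n - k - 1))) w := by
  unfold trm
  exact (hasDerivAt_pow (n-k) w).const_mul _

theorem part1 (β : ℝ) (hβ : 0 ≤ β) (m n : ℕ) (hmn : m < n) (z w : ℂ) (hw : w ≠ 0) :
    ((β : ℂ) / w) * Zc β n m w z + deriv (fun w' => Zc β n m w' z) w
          = ((n + β : ℝ) : ℂ) * Zc β (n - 1) m w z := by
  simp only [Zc_eq]
  rw [(HasDerivAt.fun_sum (fun k _ => trm_dz β n m w z k)).deriv, Finset.mul_sum, Finset.mul_sum,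
    ← Finset.sum_add_distrib]
  refine Finset.sum_congr rfl fun k hk => ?_
  have hk' : k ≤ m := by simpa [Nat.lt_succ_iff] using hk
  obtain ⟨j, rfl⟩ := Nat.exists_eq_add_of_le hk'
  obtain ⟨i, rfl⟩ := Nat.exists_eq_add_of_lt hmn
  have e1 : k + j + i + 1 - k = j + i + 1 := by omega
  have e2 : k + j + i + 1 - 1 = k + j + i := by omega
  have e3 : k + j + i - k = j + i := by omega
  have e4 : k + j - k = j := by omega
  have e5 : j + i + 1 - 1 = j + i := by omega
  unfold trm
  rw [e2, e1, e3, e4, e5, poch_succ', poch_succ']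
  have h1 := poch_ne β hβ (j+i)
  have h2 := lin_ne β hβ (j+i)
  have h3 : (k.factorial : ℂ) ≠ 0 := by exact_mod_cast k.factorial_ne_zero
  have h4 : (j.factorial : ℂ) ≠ 0 := by exact_mod_cast j.factorial_ne_zero
  push_cast at h2 ⊢
  field_simp
  ring

theorem part3 (β : ℝ) (hβ : 0 ≤ β) (m n : ℕ) (hmn : m + 1 < n) (z w : ℂ) :
    -deriv (fun z' => Zc β n (m+1) w z') z = Zc β n m w z := by
  simp only [Zc_eq]
  rw [(HasDerivAt.fun_sum (fun k _ => trm_dw β n (m+1) w z k)).deriv, Finset.sum_range_succ]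
  simp only [Nat.sub_self, Nat.cast_zero, zero_mul, mul_zero, add_zero]
  rw [← Finset.sum_neg_distrib]
  refine Finset.sum_congr rfl fun k hk => ?_
  have hk' : k ≤ m := by simpa [Nat.lt_succ_iff] using hk
  obtain ⟨j, rfl⟩ := Nat.exists_eq_add_of_le hk'
  have e1 : k + j + 1 - k = j + 1 := by omega
  have e4 : k + j - k = j := by omega
  have e5 : j + 1 - 1 = j := by omega
  unfold trm
  rw [e1, e4, e5, Nat.factorial_succ]
  have h1 := poch_ne β hβ (n-k)
  have h3 : (k.factorial : ℂ) ≠ 0 := by exact_mod_cast k.factorial_ne_zero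
  have h4 : (j.factorial : ℂ) ≠ 0 := by exact_mod_cast j.factorial_ne_zero
  have h5 : (j : ℂ) + 1 ≠ 0 := by exact_mod_cast j.succ_ne_zero
  push_cast
  field_simp
  ring

theorem split_sum (f : ℕ → ℂ) (c : ℂ) (m : ℕ) :
    c * ∑ k ∈ Finset.range (m + 1), f k = ∑ k ∈ Finset.range (m+1), (c - k) * f k
      + ∑ k ∈ Finset.range m, ((k:ℂ) + 1) * f (k+1) := by
  have : ∑ k ∈ Finset.range m, ((k:ℂ) + 1) * f (k+1)
      = ∑ k ∈ Finset.range (m+1), (k:ℂ) * f k := by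
    rw [Finset.sum_range_succ']
    simp
  rw [this, ← Finset.sum_add_distrib, Finset.mul_sum]
  exact Finset.sum_congr rfl fun k _ => by ring

theorem part2a (β : ℝ) (hβ : 0 ≤ β) (m n : ℕ) (hmn : m < n) (z w : ℂ) :
    ∑ k ∈ Finset.range (m+1), ((β:ℂ) + 1 + n - k) * trm β (n+1) m w z k
      = ((β:ℂ) + 1 + n) * (w * Zc β n m w z) := by
  rw [Zc_eq, Finset.mul_sum, Finset.mul_sum]
  refine Finset.sum_congr rfl fun k hk => ?_
  have hk' : k ≤ m := by simpa [Nat.lt_succ_iff] using hk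
  obtain ⟨j, rfl⟩ := Nat.exists_eq_add_of_le hk'
  obtain ⟨i, rfl⟩ := Nat.exists_eq_add_of_lt hmn
  have e1 : k + j + i + 1 - k = j + i + 1 := by omega
  have e2 : k + j + i + 1 + 1 - k = j + i + 1 + 1 := by omega
  have e4 : k + j - k = j := by omega
  unfold trm
  rw [e2, e1, e4, poch_succ' _ (k+j+i+1), poch_succ' _ (j+i+1)]
  have h1 := poch_ne β hβ (j+i+1)
  have h2 := lin_ne β hβ (j+i+1)
  have h3 : (k.factorial : ℂ) ≠ 0 := by exact_mod_cast k.factorial_ne_zero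
  have h4 : (j.factorial : ℂ) ≠ 0 := by exact_mod_cast j.factorial_ne_zero
  push_cast at h2 ⊢
  field_simp
  ring

theorem part2b (β : ℝ) (hβ : 0 ≤ β) (m n : ℕ) (hmn : m + 1 < n) (z w : ℂ) :
    ∑ k ∈ Finset.range (m+1), ((k:ℂ) + 1) * trm β (n+1) (m+1) w z (k+1)
      = ((β:ℂ) + 1 + n) * Zc β n m w z := by
  rw [Zc_eq, Finset.mul_sum]
  refine Finset.sum_congr rfl fun k hk => ?_
  unfold trm
  rw [Nat.add_sub_add_right, Nat.add_sub_add_right, poch_succ', Nat.factorial_succ]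
  have h1 := poch_ne β hβ (n-k)
  have h3 : (k.factorial : ℂ) ≠ 0 := by exact_mod_cast k.factorial_ne_zero
  have h4 : ((m-k).factorial : ℂ) ≠ 0 := by exact_mod_cast (m-k).factorial_ne_zero
  have h5 : (k : ℂ) + 1 ≠ 0 := by exact_mod_cast k.succ_ne_zero
  push_cast
  field_simp

theorem part2 (β : ℝ) (hβ : 0 ≤ β) (m n : ℕ) (hmn : m < n) (z w : ℂ) :
    w * Zc β n m w z - deriv (fun z' => Zc β n m w z') z = Zc β (n + 1) m w z := by
  have hc := lin_ne β hβ n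
  apply mul_left_cancel₀ hc
  rw [Zc_eq β (n+1), split_sum, part2a β hβ m n hmn]
  rcases m with _ | m
  · have : (fun z' => Zc β n 0 w z') = fun z' => Zc β n 0 w 0 := by
      funext z'
      simp [Zc]
    rw [this]
    simp
  · rw [part2b β hβ m n hmn, ← part3 β hβ m n hmn]
    ring

theorem part4 (β : ℝ) (hβ : 0 ≤ β) (m n : ℕ) (hmn : m < n) (z w : ℂ) :
    ((n + β : ℝ) : ℂ) * Zc β (n - 1) m w z - z * Zc β n m w z
      = ((m : ℂ) + 1) * Zc β n (m + 1) w z := by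
  simp only [Zc_eq]
  rw [split_sum (trm β n (m+1) w z) _ (m+1), Finset.sum_range_succ _ (m+1)]
  have : ((m:ℂ) + 1 - ((m+1 : ℕ) : ℂ)) = 0 := by push_cast; ring
  rw [this, zero_mul, add_zero, sub_eq_add_neg, add_comm, Finset.mul_sum, Finset.mul_sum,
    ← Finset.sum_neg_distrib]
  congr 1
  · refine Finset.sum_congr rfl fun k hk => ?_
    have hk' : k ≤ m := by simpa [Nat.lt_succ_iff] using hk
    obtain ⟨j, rfl⟩ := Nat.exists_eq_add_of_le hk'
    have e1 : k + j + 1 - k = j + 1 := by omega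
    have e4 : k + j - k = j := by omega
    unfold trm
    rw [e1, e4, Nat.factorial_succ]
    have h1 := poch_ne β hβ (n-k)
    have h3 : (k.factorial : ℂ) ≠ 0 := by exact_mod_cast k.factorial_ne_zero
    have h4 : (j.factorial : ℂ) ≠ 0 := by exact_mod_cast j.factorial_ne_zero
    have h5 : (j : ℂ) + 1 ≠ 0 := by exact_mod_cast j.succ_ne_zero
    push_cast
    field_simp
    ring
  · refine Finset.sum_congr rfl fun k hk => ?_
    obtain ⟨p, rfl⟩ : ∃ p, n = p + 1 := ⟨n - 1, by omega⟩
    unfold trm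
    rw [Nat.add_sub_add_right p 1 k, Nat.add_sub_add_right m 1 k, Nat.add_sub_cancel, poch_succ',
      Nat.factorial_succ]
    have h1 := poch_ne β hβ (p-k)
    have h3 : (k.factorial : ℂ) ≠ 0 := by exact_mod_cast k.factorial_ne_zero
    have h4 : ((m-k).factorial : ℂ) ≠ 0 := by exact_mod_cast (m-k).factorial_ne_zero
    have h5 : (k : ℂ) + 1 ≠ 0 := by exact_mod_cast k.succ_ne_zero
    push_cast
    field_simp
    ring

/-- Ladder operators `𝒜₁, 𝒜₁†, 𝒜₂, 𝒜₂†` for the case `n > m`, acting on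
`G(z,w) = Z^{(β)}_{n,m}(w,z)` (the 2D Laguerre polynomial with interchanged variables). -/
theorem ladder_case_n_gt_m (β : ℝ) (hβ : 0 ≤ β) (m n : ℕ) (hmn : m < n) :
    (∀ z w : ℂ, w ≠ 0 →
        ((β : ℂ) / w) * Zc β n m w z + deriv (fun w' => Zc β n m w' z) w
          = ((n + β : ℝ) : ℂ) * Zc β (n - 1) m w z) ∧
    (∀ z w : ℂ,
        w * Zc β n m w z - deriv (fun z' => Zc β n m w z') z = Zc β (n + 1) m w z) ∧
    (1 ≤ m → ∀ z w : ℂ,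
        -deriv (fun z' => Zc β n m w z') z = Zc β n (m - 1) w z) ∧
    (∀ z w : ℂ, w ≠ 0 →
        ((β : ℂ) / w) * Zc β n m w z + deriv (fun w' => Zc β n m w' z) w
            - z * Zc β n m w z
          = ((m : ℂ) + 1) * Zc β n (m + 1) w z) := by
  refine ⟨fun z w hw => part1 β hβ m n hmn z w hw, fun z w => part2 β hβ m n hmn z w, ?_, ?_⟩
  · intro hm z w
    obtain ⟨p, rfl⟩ : ∃ p, m = p + 1 := ⟨m - 1, by omega⟩
    exact part3 β hβ p n hmn z w
  · intro z w hw
    rw [part1 β hβ m n hmn z w hw, part4 β hβ m n hmn]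
end

section
/- For every real β ≥ 0, the family of functions z ↦ Z^{(β)}_{m,n}(z, conj(z)) / √(C(m,n,β)), indexed by (m,n) ∈ ℕ × ℕ, where C(m,n,β) = Γ(β + max(m,n) + 1) / (min(m,n))!, is a complete orthonormal system (Hilbert basis) of the Hilbert space L²(ℂ, dν), where dν(z) = π^{−1} |z|^{2β} e^{−|z|²} dA(z) and dA is Lebesgue measure on ℂ ≅ ℝ². -/
open MeasureTheory Finset

/-- The 2D Laguerre polynomial for all index pairs, using `Z^{(β)}_{m,n}(z,w) = Z^{(β)}_{n,m}(w,z)`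
for `m < n`. -/
noncomputable def Zfull (β : ℝ) (m n : ℕ) (z w : ℂ) : ℂ :=
  if n ≤ m then Zc β m n z w else Zc β n m w z

/-- Normalization constant `C(m,n,β) = Γ(β + max(m,n) + 1) / (min(m,n))!`. -/
noncomputable def Cconst (β : ℝ) (m n : ℕ) : ℝ :=
  Real.Gamma (β + max m n + 1) / (min m n).factorial


/-! ### The numerical identity -/

/-- The coefficients of the 2D Laguerre polynomials. -/
noncomputable def lcoef (β : ℝ) (M N k : ℕ) : ℝ :=
  (-1 : ℝ) ^ (N - k) * poch (β + 1) M / (k.factorial * (N - k).factorial * poch (β + 1) (M - k))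

lemma poch_pos {a : ℝ} (ha : 0 < a) (j : ℕ) : 0 < poch a j := by
  unfold poch
  exact Finset.prod_pos fun i _ => by positivity

lemma Gamma_add_nat {a : ℝ} (ha : 0 < a) (j : ℕ) :
    Real.Gamma (a + j) = poch a j * Real.Gamma a := by
  induction j with
  | zero => simp [poch]
  | succ j ih =>
    have h : a + ((j + 1 : ℕ) : ℝ) = (a + j) + 1 := by push_cast; ring
    rw [h, Real.Gamma_add_one (by positivity), ih]
    simp only [poch, Finset.prod_range_succ]
    ring

/-- The Pochhammer polynomial, shifted. -/
noncomputable def pochPoly (a : ℝ) (i : ℕ) : Polynomial ℝ :=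
  ∏ l ∈ Finset.range i, (Polynomial.X + Polynomial.C (a + l))

lemma pochPoly_monic (a : ℝ) (i : ℕ) : (pochPoly a i).Monic :=
  Polynomial.monic_prod_of_monic _ _ fun _ _ => Polynomial.monic_X_add_C _

lemma pochPoly_natDegree (a : ℝ) (i : ℕ) : (pochPoly a i).natDegree = i := by
  unfold pochPoly
  rw [Polynomial.natDegree_prod_of_monic _ _ fun _ _ => Polynomial.monic_X_add_C _]
  simp only [Polynomial.natDegree_X_add_C, Finset.sum_const, Finset.card_range, smul_eq_mul,
    mul_one]

lemma pochPoly_eval (a x : ℝ) (i : ℕ) : (pochPoly a i).eval x = poch (a + x) i := by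
  unfold pochPoly poch
  rw [Polynomial.eval_prod]
  refine Finset.prod_congr rfl fun l _ => ?_
  simp; ring

lemma alt_sum_poch (a : ℝ) (N i : ℕ) (hi : i ≤ N) :
    ∑ j ∈ Finset.range (N + 1), (-1 : ℝ) ^ j * (N.choose j) * poch (a + j) i =
      if i = N then (-1 : ℝ) ^ N * N.factorial else 0 := by
  have h := fwdDiff_iter_eq_sum_shift (1 : ℝ) (fun x => (pochPoly a i).eval x) N 0
  have h2 : ∑ j ∈ Finset.range (N + 1), (-1 : ℝ) ^ j * (N.choose j) * poch (a + j) i =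
      (-1) ^ N * ((fwdDiff (1 : ℝ))^[N] (fun x => (pochPoly a i).eval x) 0) := by
    rw [h, Finset.mul_sum]
    refine Finset.sum_congr rfl fun j hj => ?_
    have hj' : j ≤ N := by simpa [Nat.lt_succ_iff] using hj
    rw [pochPoly_eval]
    have e : (-1 : ℝ) ^ j = (-1) ^ N * (-1) ^ (N - j) := by
      obtain ⟨r, rfl⟩ := Nat.exists_eq_add_of_le hj'
      rw [Nat.add_sub_cancel_left, pow_add, mul_assoc, ← pow_add, ← two_mul, pow_mul]
      simp
    rw [e]
    simp [zsmul_eq_mul]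
    ring
  rw [h2]
  split_ifs with hiN
  · subst hiN
    have h3 := Polynomial.fwdDiff_iter_degree_eq_factorial (pochPoly a i)
    rw [pochPoly_natDegree] at h3
    rw [h3]
    simp [(pochPoly_monic a i).leadingCoeff]
  · rw [Polynomial.fwdDiff_iter_eq_zero_of_degree_lt]
    · simp
    · rw [pochPoly_natDegree]; omega

lemma lcoef_sum (β : ℝ) (hβ : 0 ≤ β) (M N i : ℕ) (hNM : N ≤ M) (hi : i ≤ N) :
    ∑ k ∈ Finset.range (N + 1),
      lcoef β M N k * Real.Gamma (β + ((N - k + (i + (M - N)) : ℕ) : ℝ) + 1) =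
      if i = N then (-1 : ℝ) ^ N * Real.Gamma (β + M + 1) else 0 := by
  obtain ⟨d, rfl⟩ := Nat.exists_eq_add_of_le hNM
  rw [← Finset.sum_range_reflect]
  have hfac : (N.factorial : ℝ) ≠ 0 := by positivity
  have key : ∀ j ∈ Finset.range (N + 1),
      lcoef β (N + d) N (N + 1 - 1 - j) *
        Real.Gamma (β + ((N - (N + 1 - 1 - j) + (i + (N + d - N)) : ℕ) : ℝ) + 1) =
      (Real.Gamma (β + ((N + d : ℕ) : ℝ) + 1) / N.factorial) *
        ((-1 : ℝ) ^ j * (N.choose j) * poch ((β + 1 + d) + j) i) := by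
    intro j hj
    have hj' : j ≤ N := by simpa [Nat.lt_succ_iff] using hj
    have e1 : N + 1 - 1 - j = N - j := by omega
    have e2 : N - (N - j) = j := by omega
    have e3 : N + d - N = d := by omega
    have e4 : N + d - (N - j) = d + j := by omega
    rw [e1, e2, e3]
    unfold lcoef
    rw [e2, e4]
    have g1 : β + ((j + (i + d) : ℕ) : ℝ) + 1 = (β + 1 + d + j) + i := by push_cast; ring
    have g2 : β + ((N + d : ℕ) : ℝ) + 1 = (β + 1) + ((N + d : ℕ) : ℝ) := by ring
    have g3 : β + 1 + d + j = (β + 1) + ((d + j : ℕ) : ℝ) := by push_cast; ring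
    rw [g1, Gamma_add_nat (show 0 < β + 1 + d + j by positivity), g2,
      Gamma_add_nat (show 0 < β + 1 by positivity)]
    have g4 : Real.Gamma (β + 1 + d + j) = poch (β + 1) (d + j) * Real.Gamma (β + 1) := by
      rw [g3, Gamma_add_nat (by positivity)]
    rw [g4, Nat.cast_choose ℝ hj']
    have p1 := (poch_pos (show 0 < β + 1 by positivity) (d + j)).ne'
    field_simp
  rw [Finset.sum_congr rfl key, ← Finset.mul_sum, alt_sum_poch _ _ _ hi]
  split_ifs
  · field_simp
  · simp

/-! ### The measure -/

/-- The weighted measure. -/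
noncomputable def lmeas (β : ℝ) : Measure ℂ := volume.withDensity (fun z =>
      ENNReal.ofReal (Real.pi⁻¹ * ‖z‖ ^ (2 * β) * Real.exp (-(‖z‖ ^ 2))))

lemma lmeas_meas (β : ℝ) : Measurable (fun z : ℂ =>
      ENNReal.ofReal (Real.pi⁻¹ * ‖z‖ ^ (2 * β) * Real.exp (-(‖z‖ ^ 2)))) := by
  fun_prop

lemma lmeas_dens_nonneg (β : ℝ) (z : ℂ) :
    0 ≤ Real.pi⁻¹ * ‖z‖ ^ (2 * β) * Real.exp (-(‖z‖ ^ 2)) := by positivity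

lemma lmeas_integral {E : Type*} [NormedAddCommGroup E] [NormedSpace ℝ E] (β : ℝ) (f : ℂ → E) :
    ∫ z, f z ∂(lmeas β) =
      ∫ z, (Real.pi⁻¹ * ‖z‖ ^ (2 * β) * Real.exp (-(‖z‖ ^ 2))) • f z := by
  unfold lmeas
  rw [integral_withDensity_eq_integral_toReal_smul (lmeas_meas β) (by simp)]
  simp_rw [ENNReal.toReal_ofReal (lmeas_dens_nonneg β _)]

lemma lmeas_integrable {E : Type*} [NormedAddCommGroup E] [NormedSpace ℝ E] (β : ℝ) (f : ℂ → E) :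
    Integrable f (lmeas β) ↔
      Integrable (fun z => (Real.pi⁻¹ * ‖z‖ ^ (2 * β) * Real.exp (-(‖z‖ ^ 2))) • f z) := by
  unfold lmeas
  rw [integrable_withDensity_iff_integrable_smul' (lmeas_meas β) (by simp)]
  simp_rw [ENNReal.toReal_ofReal (lmeas_dens_nonneg β _)]

lemma lmeas_exp (β : ℝ) (hβ : 0 ≤ β) (c : ℝ) :
    Integrable (fun z : ℂ => Real.exp (c * ‖z‖)) (lmeas β) := by
  rw [lmeas_integrable]
  have h0 : Integrable (fun z : ℂ => ‖z‖ ^ (2 * β) * Real.exp (-(1/2) * ‖z‖ ^ (2 : ℝ))) := by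
    apply Integrable.of_integral_ne_zero
    rw [Complex.integral_rpow_mul_exp_neg_mul_rpow (by norm_num) (by linarith) (by norm_num)]
    have := Real.Gamma_pos_of_pos (show 0 < (2 * β + 2) / 2 by positivity)
    positivity
  refine (h0.const_mul (Real.pi⁻¹ * Real.exp (c ^ 2 / 2))).mono' (by fun_prop) ?_
  refine Filter.Eventually.of_forall fun z => ?_
  rw [Real.norm_of_nonneg (by positivity), smul_eq_mul]
  have : Real.exp (-(‖z‖ ^ 2)) * Real.exp (c * ‖z‖) ≤
      Real.exp (c ^ 2 / 2) * Real.exp (-(1/2) * ‖z‖ ^ (2 : ℝ)) := by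
    rw [← Real.exp_add, ← Real.exp_add, Real.exp_le_exp, Real.rpow_two]
    nlinarith [sq_nonneg (c - ‖z‖)]
  calc _ = (Real.pi⁻¹ * ‖z‖ ^ (2 * β)) * (Real.exp (-(‖z‖ ^ 2)) * Real.exp (c * ‖z‖)) := by ring
    _ ≤ (Real.pi⁻¹ * ‖z‖ ^ (2 * β)) *
      (Real.exp (c ^ 2 / 2) * Real.exp (-(1/2) * ‖z‖ ^ (2 : ℝ))) := by gcongr
    _ = _ := by ring

lemma lmeas_finite (β : ℝ) (hβ : 0 ≤ β) : IsFiniteMeasure (lmeas β) := by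
  have h := lmeas_exp β hβ 0
  simp only [zero_mul, Real.exp_zero] at h
  rw [integrable_const_iff] at h
  simpa using h

lemma lmeas_exp_memLp (β : ℝ) (hβ : 0 ≤ β) (c : ℝ) :
    MemLp (fun z : ℂ => Real.exp (c * ‖z‖)) 2 (lmeas β) := by
  rw [memLp_two_iff_integrable_sq_norm (by fun_prop)]
  refine (lmeas_exp β hβ (2 * c)).congr (Filter.Eventually.of_forall fun z => ?_)
  simp only [Real.norm_eq_abs, Real.abs_exp, ← Real.exp_nat_mul]
  congr 1; push_cast; ring

/-- Monomials. -/
noncomputable def mon (a b : ℕ) (z : ℂ) : ℂ := z ^ a * (starRingEnd ℂ z) ^ b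

lemma mon_cont (a b : ℕ) : Continuous (mon a b) := by
  unfold mon; fun_prop

lemma mon_norm (a b : ℕ) (z : ℂ) : ‖mon a b z‖ = ‖z‖ ^ (a + b) := by
  simp [mon, pow_add]

lemma mon_mul (a b c d : ℕ) (z : ℂ) : mon a b z * mon c d z = mon (a + c) (b + d) z := by
  unfold mon; ring

lemma mon_conj (a b : ℕ) (z : ℂ) : starRingEnd ℂ (mon a b z) = mon b a z := by
  unfold mon; simp [mul_comm]

lemma mon_memLp (β : ℝ) (hβ : 0 ≤ β) (a b : ℕ) : MemLp (mon a b) 2 (lmeas β) := by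
  refine ((lmeas_exp_memLp β hβ 1).const_mul ((a + b).factorial : ℝ)).of_le
    (mon_cont a b).aestronglyMeasurable (Filter.Eventually.of_forall fun z => ?_)
  rw [mon_norm, Real.norm_of_nonneg (by positivity), one_mul]
  have := Real.pow_div_factorial_le_exp ‖z‖ (norm_nonneg z) (a + b)
  rw [div_le_iff₀ (by positivity)] at this
  linarith

lemma mon_integrable (β : ℝ) (hβ : 0 ≤ β) (a b : ℕ) : Integrable (mon a b) (lmeas β) := by
  have := lmeas_finite β hβ
  exact (mon_memLp β hβ a b).integrable (by norm_num)

lemma mon_integral_ne (β : ℝ) (a b : ℕ) (hab : a ≠ b) :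
    ∫ z, mon a b z ∂(lmeas β) = 0 := by
  rw [lmeas_integral]
  set c : Circle := Circle.exp (Real.pi / ((a : ℝ) - b)) with hc
  have hd : (a : ℝ) - b ≠ 0 := sub_ne_zero.mpr (by exact_mod_cast hab)
  have hm : mon a b (c : ℂ) = -1 := by
    unfold mon
    rw [hc, Circle.coe_exp, ← Complex.exp_conj, ← Complex.exp_nat_mul, ← Complex.exp_nat_mul,
      ← Complex.exp_add, ← Complex.exp_pi_mul_I]
    congr 1
    have hd' : (a : ℂ) - b ≠ 0 := by exact_mod_cast hd
    simp only [map_mul, Complex.conj_ofReal, Complex.conj_I]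
    push_cast
    field_simp
    ring
  have h := (rotation c).measurePreserving.integral_comp
    (rotation c).toHomeomorph.measurableEmbedding
    (fun z => (Real.pi⁻¹ * ‖z‖ ^ (2 * β) * Real.exp (-(‖z‖ ^ 2))) • mon a b z)
  have h2 : ∀ z, mon a b (rotation c z) = - mon a b z := by
    intro z
    have : mon a b (rotation c z) = mon a b (c : ℂ) * mon a b z := by
      simp only [mon, rotation_apply, map_mul]; ring
    rw [this, hm]; ring
  simp only [h2, LinearIsometryEquiv.norm_map, smul_neg, integral_neg] at h
  exact self_eq_neg.mp h.symm

lemma mon_integral_eq (β : ℝ) (hβ : 0 ≤ β) (a : ℕ) :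
    ∫ z, mon a a z ∂(lmeas β) = ((Real.Gamma (β + a + 1) : ℝ) : ℂ) := by
  rw [lmeas_integral]
  have h := Complex.integral_rpow_mul_exp_neg_rpow (p := 2) (q := 2 * β + 2 * a) (by norm_num)
    (by have : (0 : ℝ) ≤ a := by positivity
        linarith)
  have e : ∀ z : ℂ, (Real.pi⁻¹ * ‖z‖ ^ (2 * β) * Real.exp (-(‖z‖ ^ 2))) • mon a a z =
      ((Real.pi⁻¹ * (‖z‖ ^ (2 * β + 2 * a) * Real.exp (-‖z‖ ^ (2 : ℝ))) : ℝ) : ℂ) := by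
    intro z
    have e1 : mon a a z = ((‖z‖ ^ (2 * a) : ℝ) : ℂ) := by
      unfold mon
      rw [← mul_pow, Complex.mul_conj, pow_mul, Complex.normSq_eq_norm_sq]
      push_cast; rfl
    have e2 : ‖z‖ ^ (2 * β + 2 * (a : ℝ)) = ‖z‖ ^ (2 * β) * ‖z‖ ^ (2 * a) := by
      rw [Real.rpow_add_of_nonneg (norm_nonneg z) (by positivity) (by positivity)]
      congr 1
      exact_mod_cast Real.rpow_natCast ‖z‖ (2 * a)
    rw [e1, e2, Real.rpow_two, Complex.real_smul]
    push_cast; ring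
  simp_rw [e]
  rw [integral_complex_ofReal, integral_const_mul, h]
  congr 1
  have : (2 * β + 2 * (a : ℝ) + 2) / 2 = β + a + 1 := by ring
  rw [this]
  field_simp

lemma mon_integral (β : ℝ) (hβ : 0 ≤ β) (a b : ℕ) :
    ∫ z, mon a b z ∂(lmeas β) = if a = b then ((Real.Gamma (β + a + 1) : ℝ) : ℂ) else 0 := by
  split_ifs with h
  · subst h; exact mon_integral_eq β hβ a
  · exact mon_integral_ne β a b h

/-! ### Orthogonality -/

/-- The 2D Laguerre polynomials on the diagonal `w = conj z`. -/
noncomputable def lpoly (β : ℝ) (m n : ℕ) (z : ℂ) : ℂ :=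
  ∑ k ∈ Finset.range (min m n + 1),
    ((lcoef β (max m n) (min m n) k : ℝ) : ℂ) * mon (m - k) (n - k) z

lemma Zfull_eq (β : ℝ) (m n : ℕ) (z : ℂ) : Zfull β m n z (starRingEnd ℂ z) = lpoly β m n z := by
  unfold Zfull lpoly Zc mon
  split_ifs with h
  · rw [min_eq_right h, max_eq_left h]
    refine Finset.sum_congr rfl fun k _ => ?_
    unfold lcoef
    ring
  · rw [min_eq_left (by omega), max_eq_right (by omega)]
    refine Finset.sum_congr rfl fun k _ => ?_
    unfold lcoef
    ring

lemma lpoly_memLp (β : ℝ) (hβ : 0 ≤ β) (m n : ℕ) : MemLp (lpoly β m n) 2 (lmeas β) := by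
  unfold lpoly
  exact memLp_finsetSum _ fun k _ => (mon_memLp β hβ _ _).const_mul _

lemma lpoly_conj (β : ℝ) (m n : ℕ) (z : ℂ) : starRingEnd ℂ (lpoly β m n z) =
    ∑ k ∈ Finset.range (min m n + 1),
      ((lcoef β (max m n) (min m n) k : ℝ) : ℂ) * mon (n - k) (m - k) z := by
  unfold lpoly
  rw [map_sum]
  refine Finset.sum_congr rfl fun k _ => ?_
  rw [map_mul, Complex.conj_ofReal, mon_conj]

lemma lpoly_mon_integrable (β : ℝ) (hβ : 0 ≤ β) (m n a b : ℕ) :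
    Integrable (fun z => starRingEnd ℂ (lpoly β m n z) * mon a b z) (lmeas β) := by
  simp_rw [lpoly_conj, Finset.sum_mul, mul_assoc, mon_mul]
  exact integrable_finsetSum _ fun k _ => (mon_integrable β hβ _ _).const_mul _

lemma lpoly_mon (β : ℝ) (hβ : 0 ≤ β) (m n a b : ℕ) (h : min a b ≤ min m n) :
    ∫ z, starRingEnd ℂ (lpoly β m n z) * mon a b z ∂(lmeas β) =
      if a = m ∧ b = n then
        (((-1 : ℝ) ^ (min m n) * Real.Gamma (β + ((max m n : ℕ) : ℝ) + 1) : ℝ) : ℂ) else 0 := by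
  simp_rw [lpoly_conj, Finset.sum_mul, mul_assoc, mon_mul]
  rw [integral_finsetSum _ fun k _ => (mon_integrable β hβ _ _).const_mul _]
  simp_rw [integral_const_mul, mon_integral β hβ]
  by_cases hd : n + a = m + b
  · have hs := lcoef_sum β hβ (max m n) (min m n) (min a b) (by omega) h
    have hiff : (a = m ∧ b = n) ↔ min a b = min m n := by omega
    simp only [hiff]
    have : (∑ k ∈ Finset.range (min m n + 1), ((lcoef β (max m n) (min m n) k : ℝ) : ℂ) *
        (if n - k + a = m - k + b then
          ((Real.Gamma (β + ((n - k + a : ℕ) : ℝ) + 1) : ℝ) : ℂ) else 0)) =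
        ((∑ k ∈ Finset.range (min m n + 1), lcoef β (max m n) (min m n) k *
          Real.Gamma (β + ((min m n - k + (min a b + (max m n - min m n)) : ℕ) : ℝ) + 1) : ℝ) : ℂ) := by
      rw [Complex.ofReal_sum]
      refine Finset.sum_congr rfl fun k hk => ?_
      have hk' : k < min m n + 1 := Finset.mem_range.mp hk
      rw [if_pos (by omega)]
      have e : n - k + a = min m n - k + (min a b + (max m n - min m n)) := by omega
      rw [e]
      push_cast
      rfl
    rw [this, hs]
    split_ifs <;> simp
  · rw [if_neg (by omega)]
    refine Finset.sum_eq_zero fun k hk => ?_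
    have hk' : k < min m n + 1 := Finset.mem_range.mp hk
    rw [if_neg (by omega), mul_zero]

lemma lcoef_zero (β : ℝ) (hβ : 0 ≤ β) (M N : ℕ) :
    lcoef β M N 0 = (-1) ^ N / N.factorial := by
  have p1 := (poch_pos (show 0 < β + 1 by positivity) M).ne'
  unfold lcoef
  simp only [Nat.sub_zero, Nat.factorial_zero, Nat.cast_one, one_mul]
  field_simp

lemma lpoly_lpoly_aux (β : ℝ) (hβ : 0 ≤ β) (m n a b : ℕ) (h : min a b ≤ min m n) :
    ∫ z, starRingEnd ℂ (lpoly β m n z) * lpoly β a b z ∂(lmeas β) =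
      if a = m ∧ b = n then ((Cconst β m n : ℝ) : ℂ) else 0 := by
  have e : ∀ z, starRingEnd ℂ (lpoly β m n z) * lpoly β a b z =
      ∑ k ∈ Finset.range (min a b + 1), ((lcoef β (max a b) (min a b) k : ℝ) : ℂ) *
        (starRingEnd ℂ (lpoly β m n z) * mon (a - k) (b - k) z) := by
    intro z
    conv_lhs => rw [lpoly.eq_1 β a b, Finset.mul_sum]
    exact Finset.sum_congr rfl fun k _ => by ring
  simp_rw [e]
  rw [integral_finsetSum _ fun k _ => (lpoly_mon_integrable β hβ _ _ _ _).const_mul _]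
  simp_rw [integral_const_mul]
  rw [Finset.sum_eq_single 0]
  · rw [Nat.sub_zero, Nat.sub_zero, lpoly_mon β hβ _ _ _ _ h]
    split_ifs with hh
    · obtain ⟨rfl, rfl⟩ := hh
      rw [lcoef_zero β hβ, ← Complex.ofReal_mul]
      congr 1
      unfold Cconst
      have : ((-1 : ℝ) ^ min a b) * (-1) ^ min a b = 1 := by
        rw [← mul_pow]; simp
      push_cast
      rw [div_mul_eq_mul_div, ← mul_assoc, this, one_mul]
    · simp
  · intro k hk hk0
    have hk' : k < min a b + 1 := Finset.mem_range.mp hk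
    rw [lpoly_mon β hβ _ _ _ _ (by omega), if_neg (by omega), mul_zero]
  · simp

lemma lpoly_lpoly (β : ℝ) (hβ : 0 ≤ β) (m n a b : ℕ) :
    ∫ z, starRingEnd ℂ (lpoly β m n z) * lpoly β a b z ∂(lmeas β) =
      if a = m ∧ b = n then ((Cconst β m n : ℝ) : ℂ) else 0 := by
  rcases le_total (min a b) (min m n) with h | h
  · exact lpoly_lpoly_aux β hβ m n a b h
  · have h1 := lpoly_lpoly_aux β hβ a b m n h
    have h2 := congrArg (starRingEnd ℂ) h1
    rw [← integral_conj] at h2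
    simp only [map_mul, Complex.conj_conj] at h2
    simp_rw [mul_comm (starRingEnd ℂ (lpoly β m n _))]
    rw [h2]
    by_cases hh : a = m ∧ b = n
    · obtain ⟨rfl, rfl⟩ := hh
      simp
    · rw [if_neg hh, if_neg (by omega)]; simp

lemma Cconst_pos (β : ℝ) (hβ : 0 ≤ β) (m n : ℕ) : 0 < Cconst β m n := by
  unfold Cconst
  have := Real.Gamma_pos_of_pos (show 0 < β + max (m : ℝ) n + 1 by positivity)
  positivity

/-! ### Completeness -/

lemma lmeas_fourier (β : ℝ) (hβ : 0 ≤ β) (g : ℂ → ℂ) (hg : MemLp g 2 (lmeas β))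
    (h : ∀ a b, ∫ z, mon a b z * g z ∂(lmeas β) = 0) (t : ℂ) :
    ∫ z, Complex.exp (((inner ℝ z t : ℝ) : ℂ) * Complex.I) * g z ∂(lmeas β) = 0 := by
  have hint : ∀ a b, Integrable (fun z => mon a b z * g z) (lmeas β) := fun a b =>
    (mon_memLp β hβ a b).integrable_mul hg
  have hin : ∀ z : ℂ, ((inner ℝ z t : ℝ) : ℂ) * Complex.I =
      (Complex.I / 2 * starRingEnd ℂ t) * z + (Complex.I / 2 * t) * starRingEnd ℂ z := by
    intro z
    apply Complex.ext
    · simp [Complex.inner]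
    · simp [Complex.inner]; ring
  have hterm : ∀ n : ℕ, ∫ z, (((inner ℝ z t : ℝ) : ℂ) * Complex.I) ^ n / n.factorial * g z
      ∂(lmeas β) = 0 := by
    intro n
    have e : ∀ z, (((inner ℝ z t : ℝ) : ℂ) * Complex.I) ^ n / n.factorial * g z =
        ∑ k ∈ Finset.range (n + 1), ((Complex.I / 2 * starRingEnd ℂ t) ^ k *
          (Complex.I / 2 * t) ^ (n - k) * (n.choose k) / n.factorial) * (mon k (n - k) z * g z) := by
      intro z
      rw [hin, add_pow, Finset.sum_div, Finset.sum_mul]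
      refine Finset.sum_congr rfl fun k _ => ?_
      unfold mon
      rw [mul_pow, mul_pow]
      ring
    simp_rw [e]
    rw [integral_finsetSum _ fun k _ => (hint _ _).const_mul _]
    simp_rw [integral_const_mul, h]
    simp
  have hsumm : ∀ z : ℂ, HasSum (fun n : ℕ => (‖t‖ * ‖z‖) ^ n / n.factorial * ‖g z‖)
      (Real.exp (‖t‖ * ‖z‖) * ‖g z‖) := by
    intro z
    have := NormedSpace.expSeries_div_hasSum_exp (𝔸 := ℝ) (‖t‖ * ‖z‖)
    rw [← Real.exp_eq_exp_ℝ] at this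
    exact this.mul_right _
  have hs := hasSum_integral_of_dominated_convergence (μ := lmeas β)
    (F := fun (n : ℕ) z => (((inner ℝ z t : ℝ) : ℂ) * Complex.I) ^ n / n.factorial * g z)
    (f := fun z => Complex.exp (((inner ℝ z t : ℝ) : ℂ) * Complex.I) * g z)
    (fun n z => (‖t‖ * ‖z‖) ^ n / n.factorial * ‖g z‖)
    (fun n => (Continuous.aestronglyMeasurable (by fun_prop)).mul hg.1)
    (fun n => Filter.Eventually.of_forall fun z => by
      simp only [norm_mul, norm_div, norm_pow, Complex.norm_I, mul_one, Complex.norm_real,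
        Complex.norm_natCast]
      gcongr
      rw [mul_comm]
      exact norm_inner_le_norm z t)
    (Filter.Eventually.of_forall fun z => (hsumm z).summable)
    (by
      simp_rw [fun z => (hsumm z).tsum_eq]
      exact (lmeas_exp_memLp β hβ ‖t‖).integrable_mul hg.norm)
    (Filter.Eventually.of_forall fun z => by
      have := NormedSpace.expSeries_div_hasSum_exp (𝔸 := ℂ) (((inner ℝ z t : ℝ) : ℂ) * Complex.I)
      rw [← Complex.exp_eq_exp_ℂ] at this
      exact this.mul_right _)
  simp_rw [hterm] at hs
  exact hs.unique hasSum_zero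

lemma real_zero (β : ℝ) (hβ : 0 ≤ β) (u : ℂ → ℝ) (hu : MemLp u 2 (lmeas β))
    (h : ∀ a b, ∫ z, mon a b z * (u z : ℂ) ∂(lmeas β) = 0) : u =ᵐ[lmeas β] 0 := by
  have : IsFiniteMeasure (lmeas β) := lmeas_finite β hβ
  have hui : Integrable u (lmeas β) := hu.integrable (by norm_num)
  have hfin1 : IsFiniteMeasure ((lmeas β).withDensity fun z => ENNReal.ofReal (u z)) :=
    isFiniteMeasure_withDensity_ofReal hui.2
  have hfin2 : IsFiniteMeasure ((lmeas β).withDensity fun z => ENNReal.ofReal (-u z)) :=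
    isFiniteMeasure_withDensity_ofReal hui.neg.2
  have hm1 : AEMeasurable (fun z => ENNReal.ofReal (u z)) (lmeas β) :=
    hui.1.aemeasurable.ennreal_ofReal
  have hm2 : AEMeasurable (fun z => ENNReal.ofReal (-u z)) (lmeas β) :=
    hui.1.aemeasurable.neg.ennreal_ofReal
  have hEq : (lmeas β).withDensity (fun z => ENNReal.ofReal (u z)) =
      (lmeas β).withDensity (fun z => ENNReal.ofReal (-u z)) := by
    apply Measure.ext_of_charFun
    ext t
    rw [charFun_apply, charFun_apply,
      integral_withDensity_eq_integral_toReal_smul₀ hm1 (by simp),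
      integral_withDensity_eq_integral_toReal_smul₀ hm2 (by simp), ← sub_eq_zero]
    have hb : ∀ v : ℂ → ℝ, Integrable v (lmeas β) →
        Integrable (fun z => (ENNReal.ofReal (v z)).toReal •
          Complex.exp (((inner ℝ z t : ℝ) : ℂ) * Complex.I)) (lmeas β) := by
      intro v hv
      have h1 : Integrable (fun z => (ENNReal.ofReal (v z)).toReal) (lmeas β) := by
        simp_rw [ENNReal.toReal_ofReal']
        exact hv.pos_part
      refine h1.mono' (h1.1.smul (Continuous.aestronglyMeasurable (by fun_prop)))
        (Filter.Eventually.of_forall fun z => ?_)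
      rw [norm_smul, Complex.norm_exp_ofReal_mul_I, mul_one,
        Real.norm_of_nonneg ENNReal.toReal_nonneg]
    rw [← integral_sub (hb u hui) (hb (fun z => -u z) hui.neg)]
    rw [← lmeas_fourier β hβ (fun z => (u z : ℂ)) hu.ofReal h t]
    refine integral_congr_ae (Filter.Eventually.of_forall fun z => ?_)
    simp only [ENNReal.toReal_ofReal', ← sub_smul]
    rw [Complex.real_smul, mul_comm]
    congr 2
    rcases le_total 0 (u z) with h0 | h0
    · rw [max_eq_left h0, max_eq_right (by linarith)]; ring
    · rw [max_eq_right h0, max_eq_left (by linarith)]; ring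
  rw [withDensity_eq_iff hm1 hm2 hui.lintegral_lt_top.ne] at hEq
  filter_upwards [hEq] with z hz
  simp only [Pi.zero_apply]
  rcases le_total 0 (u z) with h0 | h0
  · rw [ENNReal.ofReal_of_nonpos (show -u z ≤ 0 by linarith), ENNReal.ofReal_eq_zero] at hz
    linarith
  · rw [ENNReal.ofReal_of_nonpos h0, eq_comm, ENNReal.ofReal_eq_zero] at hz
    linarith

lemma complex_zero (β : ℝ) (hβ : 0 ≤ β) (g : ℂ → ℂ) (hg : MemLp g 2 (lmeas β))
    (h : ∀ a b, ∫ z, mon a b z * g z ∂(lmeas β) = 0) : g =ᵐ[lmeas β] 0 := by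
  have hint : ∀ a b, Integrable (fun z => mon a b z * g z) (lmeas β) := fun a b =>
    (mon_memLp β hβ a b).integrable_mul hg
  have hint' : ∀ a b, Integrable (fun z => mon a b z * starRingEnd ℂ (g z)) (lmeas β) :=
    fun a b => (mon_memLp β hβ a b).integrable_mul hg.star
  have h' : ∀ a b, ∫ z, mon a b z * starRingEnd ℂ (g z) ∂(lmeas β) = 0 := by
    intro a b
    have := congrArg (starRingEnd ℂ) (h b a)
    rw [← integral_conj] at this
    simpa only [map_mul, mon_conj, map_zero] using this
  have hre := real_zero β hβ (fun z => (g z).re) hg.re (by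
    intro a b
    have e : ∀ z, mon a b z * ((g z).re : ℂ) =
        (1 / 2 : ℂ) * (mon a b z * g z + mon a b z * starRingEnd ℂ (g z)) := by
      intro z
      rw [Complex.re_eq_add_conj]; ring
    simp_rw [e]
    rw [integral_const_mul, integral_add (hint a b) (hint' a b), h, h']
    simp)
  have him := real_zero β hβ (fun z => (g z).im) hg.im (by
    intro a b
    have e : ∀ z, mon a b z * ((g z).im : ℂ) =
        (1 / (2 * Complex.I) : ℂ) * (mon a b z * g z - mon a b z * starRingEnd ℂ (g z)) := by
      intro z
      rw [Complex.im_eq_sub_conj]; ring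
    simp_rw [e]
    rw [integral_const_mul, integral_sub (hint a b) (hint' a b), h, h']
    simp)
  filter_upwards [hre, him] with z h1 h2
  exact Complex.ext h1 h2

lemma mon_of_lpoly (β : ℝ) (hβ : 0 ≤ β) (g : ℂ → ℂ) (hg : MemLp g 2 (lmeas β))
    (h : ∀ m n, ∫ z, starRingEnd ℂ (lpoly β m n z) * g z ∂(lmeas β) = 0) (s : ℕ) :
    ∀ a b, min a b = s → ∫ z, mon b a z * g z ∂(lmeas β) = 0 := by
  have hint : ∀ a b, Integrable (fun z => mon a b z * g z) (lmeas β) := fun a b =>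
    (mon_memLp β hβ a b).integrable_mul hg
  induction s using Nat.strong_induction_on with
  | _ s ih =>
    intro a b hab
    have h1 := h a b
    simp_rw [lpoly_conj, Finset.sum_mul, mul_assoc] at h1
    rw [integral_finsetSum _ fun k _ => (hint _ _).const_mul _] at h1
    simp_rw [integral_const_mul] at h1
    rw [Finset.sum_eq_single 0] at h1
    · rw [lcoef_zero β hβ] at h1
      rcases mul_eq_zero.mp h1 with h2 | h2
      · exfalso
        rw [Complex.ofReal_eq_zero] at h2
        have : ((-1 : ℝ) ^ (min a b)) / (min a b).factorial ≠ 0 := by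
          apply div_ne_zero
          · exact pow_ne_zero _ (by norm_num)
          · positivity
        exact this h2
      · simpa using h2
    · intro k hk hk0
      have hk' : k < min a b + 1 := Finset.mem_range.mp hk
      rw [ih (min (a - k) (b - k)) (by omega) (a - k) (b - k) rfl, mul_zero]
    · simp

/-- The normalized 2D Laguerre polynomials `z ↦ Z^{(β)}_{m,n}(z, conj z)/√C(m,n,β)`,
`(m,n) ∈ ℕ × ℕ`, form a complete orthonormal system of
`L²(ℂ, π⁻¹ |z|^{2β} e^{−|z|²} dA(z))`. -/
theorem laguerre2D_complete_orthonormal (β : ℝ) (hβ : 0 ≤ β)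
    (ν : Measure ℂ)
    (hν : ν = volume.withDensity (fun z =>
      ENNReal.ofReal (Real.pi⁻¹ * ‖z‖ ^ (2 * β) * Real.exp (-(‖z‖ ^ 2)))))
    (F : ℕ × ℕ → Lp ℂ 2 ν)
    (hF : ∀ p : ℕ × ℕ,
      (F p : ℂ → ℂ) =ᵐ[ν]
        fun z => Zfull β p.1 p.2 z (starRingEnd ℂ z) / ((Real.sqrt (Cconst β p.1 p.2) : ℝ) : ℂ)) :
    Orthonormal ℂ F ∧ (Submodule.span ℂ (Set.range F)).topologicalClosure = ⊤ := by
  have hν' : ν = lmeas β := hν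
  clear hν
  subst hν'
  have hF' : ∀ p : ℕ × ℕ, (F p : ℂ → ℂ) =ᵐ[lmeas β]
      fun z => (((Real.sqrt (Cconst β p.1 p.2))⁻¹ : ℝ) : ℂ) * lpoly β p.1 p.2 z := by
    intro p
    filter_upwards [hF p] with z hz
    rw [hz, Zfull_eq, div_eq_inv_mul, Complex.ofReal_inv]
  constructor
  · rw [orthonormal_iff_ite]
    rintro ⟨m, n⟩ ⟨a, b⟩
    rw [L2.inner_def]
    have e : ∫ z, inner ℂ ((F (m, n) : ℂ → ℂ) z) ((F (a, b) : ℂ → ℂ) z) ∂(lmeas β) =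
        ∫ z, ((((Real.sqrt (Cconst β m n))⁻¹ * (Real.sqrt (Cconst β a b))⁻¹ : ℝ)) : ℂ) *
          (starRingEnd ℂ (lpoly β m n z) * lpoly β a b z) ∂(lmeas β) := by
      refine integral_congr_ae ?_
      filter_upwards [hF' (m, n), hF' (a, b)] with z h1 h2
      rw [h1, h2, RCLike.inner_apply, map_mul, Complex.conj_ofReal]
      push_cast
      ring
    rw [e, integral_const_mul, lpoly_lpoly β hβ]
    by_cases hh : a = m ∧ b = n
    · obtain ⟨rfl, rfl⟩ := hh
      rw [if_pos ⟨rfl, rfl⟩, if_pos rfl, ← Complex.ofReal_mul, ← mul_inv,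
        Real.mul_self_sqrt (Cconst_pos β hβ a b).le, inv_mul_cancel₀ (Cconst_pos β hβ a b).ne',
        Complex.ofReal_one]
    · rw [if_neg hh, if_neg, mul_zero]
      rintro ⟨⟩
      exact hh ⟨rfl, rfl⟩
  · rw [Submodule.topologicalClosure_eq_top_iff, Submodule.eq_bot_iff]
    intro g hg
    rw [Submodule.mem_orthogonal] at hg
    have hgm : MemLp (g : ℂ → ℂ) 2 (lmeas β) := Lp.memLp g
    have h0 : ∀ m n, ∫ z, starRingEnd ℂ (lpoly β m n z) * (g : ℂ → ℂ) z ∂(lmeas β) = 0 := by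
      intro m n
      have h1 := hg (F (m, n)) (Submodule.subset_span ⟨_, rfl⟩)
      rw [L2.inner_def] at h1
      have e : ∫ z, inner ℂ ((F (m, n) : ℂ → ℂ) z) ((g : ℂ → ℂ) z) ∂(lmeas β) =
          ∫ z, (((Real.sqrt (Cconst β m n))⁻¹ : ℝ) : ℂ) *
            (starRingEnd ℂ (lpoly β m n z) * (g : ℂ → ℂ) z) ∂(lmeas β) := by
        refine integral_congr_ae ?_
        filter_upwards [hF' (m, n)] with z h1
        rw [h1, RCLike.inner_apply, map_mul, Complex.conj_ofReal]
        ring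
      rw [e, integral_const_mul] at h1
      rcases mul_eq_zero.mp h1 with h2 | h2
      · exfalso
        rw [Complex.ofReal_eq_zero, inv_eq_zero] at h2
        exact (Real.sqrt_pos.mpr (Cconst_pos β hβ m n)).ne' h2
      · exact h2
    have hz := complex_zero β hβ g hgm
      (fun a b => mon_of_lpoly β hβ g hgm h0 _ b a rfl)
    exact (Lp.eq_zero_iff_ae_eq_zero).mpr hz
end

section
/- For every real β ≥ 0, all integers m ≥ n ≥ 0, and every quaternion q ∈ ℍ with conjugate q̄: Z^{(β)}_{m+1,n}(q,q̄) = q · Z^{(β+1)}_{m,n}(q,q̄). -/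
open Finset Quaternion

/-- The quaternionic 2D Laguerre polynomial `Z^{(β)}_{m,n}(q,q̄)` (for `m ≥ n`). -/
noncomputable def Zq (β : ℝ) (m n : ℕ) (q : ℍ[ℝ]) : ℍ[ℝ] :=
  ∑ k ∈ Finset.range (n + 1),
    ((-1 : ℝ) ^ (n - k) * poch (β + 1) m /
        (k.factorial * (n - k).factorial * poch (β + 1) (m - k))) •
      (q ^ (m - k) * (star q) ^ (n - k))

theorem poch_succ_shift (a : ℝ) (j : ℕ) : poch a (j + 1) = a * poch (a + 1) j := by
  unfold poch
  rw [Finset.prod_range_succ', mul_comm]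
  congr 1
  · simp
  · refine Finset.prod_congr rfl fun i _ => ?_
    push_cast
    ring

/-- Recurrence `Z^{(β)}_{m+1,n}(q,q̄) = q · Z^{(β+1)}_{m,n}(q,q̄)`. -/
theorem quat_recurrence_beta_shift (β : ℝ) (hβ : 0 ≤ β) (m n : ℕ) (hmn : n ≤ m)
    (q : ℍ[ℝ]) :
    Zq β (m + 1) n q = q * Zq (β + 1) m n q := by
  unfold Zq
  rw [Finset.mul_sum]
  refine Finset.sum_congr rfl fun k hk => ?_
  have hk' : k ≤ m := by
    have := Finset.mem_range.mp hk
    omega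
  have h1 : m + 1 - k = (m - k) + 1 := by omega
  have hb : β + 1 ≠ 0 := by positivity
  rw [h1, poch_succ_shift, poch_succ_shift, mul_smul_comm, pow_succ', mul_assoc q]
  congr 1
  rw [show (-1 : ℝ) ^ (n - k) * ((β + 1) * poch (β + 1 + 1) m)
      = (β + 1) * ((-1 : ℝ) ^ (n - k) * poch (β + 1 + 1) m) by ring,
    show (k.factorial * (n - k).factorial * ((β + 1) * poch (β + 1 + 1) (m - k)) : ℝ)
      = (β + 1) * (k.factorial * (n - k).factorial * poch (β + 1 + 1) (m - k)) by ring,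
    mul_div_mul_left _ _ hb]
end

section
/- For every real β ≥ 0, all integers m ≥ n+1 ≥ 1, and every quaternion q ∈ ℍ with conjugate q̄: (β+m) · Z^{(β)}_{m−1,n}(q,q̄) = (n+1) · Z^{(β)}_{m,n+1}(q,q̄) + q̄ · Z^{(β)}_{m,n}(q,q̄). -/
open Finset Quaternion

/-- Recurrence `(β+m) Z^{(β)}_{m−1,n}(q,q̄) = (n+1) Z^{(β)}_{m,n+1}(q,q̄) + q̄ Z^{(β)}_{m,n}(q,q̄)`. -/
theorem quat_recurrence_lower (β : ℝ) (hβ : 0 ≤ β) (m n : ℕ) (hmn : n + 1 ≤ m)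
    (q : ℍ[ℝ]) :
    (β + m) • Zq β (m - 1) n q
      = ((n : ℝ) + 1) • Zq β m (n + 1) q + star q * Zq β m n q := by
  obtain ⟨M, rfl⟩ : ∃ M, m = M + 1 := ⟨m - 1, by omega⟩
  have hM : n ≤ M := by omega
  have hpos : ∀ j, poch (β + 1) j ≠ 0 := fun j => by
    unfold poch
    exact (Finset.prod_pos fun i _ => by positivity).ne'
  have hcomm : Commute (star q) q := star_comm_self' q
  have h2 : star q * Zq β (M + 1) n q = ∑ k ∈ Finset.range (n + 2),
      ((-1 : ℝ) ^ (n + 1 - k) * (-((n : ℝ) + 1 - k)) * poch (β + 1) (M + 1) /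
        (k.factorial * (n + 1 - k).factorial * poch (β + 1) (M + 1 - k))) •
      (q ^ (M + 1 - k) * (star q) ^ (n + 1 - k)) := by
    rw [Finset.sum_range_succ]
    have h0 : -((n : ℝ) + 1 - ((n + 1 : ℕ) : ℝ)) = 0 := by push_cast; ring
    rw [h0]
    simp only [mul_zero, zero_mul, zero_div, zero_smul, add_zero]
    unfold Zq
    rw [Finset.mul_sum]
    refine Finset.sum_congr rfl fun k hk => ?_
    obtain ⟨d, rfl⟩ : ∃ d, n = k + d := ⟨n - k, by have := Finset.mem_range.1 hk; omega⟩
    have e1 : k + d - k = d := by omega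
    have e2 : k + d + 1 - k = d + 1 := by omega
    rw [e1, e2, mul_smul_comm, ← mul_assoc, (hcomm.pow_right _).eq, mul_assoc (q ^ _), ← pow_succ']
    congr 1
    have := hpos (M + 1 - k)
    have := Nat.factorial_ne_zero k
    have := Nat.factorial_ne_zero d
    rw [Nat.factorial_succ]
    push_cast
    have : (d : ℝ) + 1 ≠ 0 := by positivity
    field_simp
    ring
  rw [h2]
  unfold Zq
  rw [Finset.smul_sum, Finset.smul_sum, ← Finset.sum_add_distrib, Finset.sum_range_succ' _ (n + 1)]
  have hz : ∀ x y : ℝ, ∀ v : ℍ[ℝ], x + y = 0 → x • v + y • v = 0 := fun x y v h => by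
    rw [← add_smul, h, zero_smul]
  rw [smul_smul, hz, add_zero]
  · refine Finset.sum_congr rfl fun k hk => ?_
    obtain ⟨d, rfl⟩ : ∃ d, n = k + d := ⟨n - k, by have := Finset.mem_range.1 hk; omega⟩
    have e1 : k + d - k = d := by omega
    have e2 : k + d + 1 - (k + 1) = d := by omega
    have e3 : M + 1 - (k + 1) = M - k := by omega
    rw [e1, e2, e3, Nat.add_sub_cancel, smul_smul, smul_smul, ← add_smul]
    congr 1
    have hP : poch (β + 1) (M + 1) = poch (β + 1) M * (β + 1 + M) := by
      unfold poch
      rw [Finset.prod_range_succ]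
    have := hpos (M - k)
    have := Nat.factorial_ne_zero k
    have := Nat.factorial_ne_zero d
    rw [hP, Nat.factorial_succ]
    push_cast
    have : (k : ℝ) + 1 ≠ 0 := by positivity
    field_simp
    ring
  · push_cast
    ring
end

section
/- For every real β ≥ 0, all integers m ≥ n ≥ 1, and all z, w ∈ ℂ: z · ∂_z Z^{(β)}_{m,n}(z,w) = (m−n) · Z^{(β)}_{m,n}(z,w) − w · Z^{(β)}_{m,n−1}(z,w). (Complex-variable form of the differential recurrence q ∂_q Z = (m−n)Z − q̄ Z_{m,n−1}, whose quaternionic version holds with the Cullen derivative.) -/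
open Finset

/-- Differential recurrence: `z ∂_z Z^{(β)}_{m,n}(z,w) = (m−n) Z^{(β)}_{m,n}(z,w) − w Z^{(β)}_{m,n−1}(z,w)`. -/
theorem diff_recurrence_z (β : ℝ) (hβ : 0 ≤ β) (m n : ℕ) (hn : 1 ≤ n) (hmn : n ≤ m)
    (z w : ℂ) :
    z * deriv (fun z' => Zc β m n z' w) z
      = (((m : ℝ) - n : ℝ) : ℂ) * Zc β m n z w - w * Zc β m (n - 1) z w := by
  obtain ⟨p, rfl⟩ : ∃ p, n = p + 1 := ⟨n - 1, by omega⟩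
  have hd : ∀ (k : ℕ) (c d : ℂ), z * (c * (((k : ℕ) : ℂ) * z ^ (k - 1)) * d)
      = (k : ℂ) * (c * z ^ k * d) := by
    intro k c d
    cases k with
    | zero => simp
    | succ k => simp only [Nat.add_sub_cancel]; ring
  have hD : HasDerivAt (fun z' => Zc β m (p + 1) z' w)
      (∑ k ∈ Finset.range (p + 1 + 1),
        (((-1 : ℝ) ^ (p + 1 - k) * poch (β + 1) m /
        (k.factorial * (p + 1 - k).factorial * poch (β + 1) (m - k)) : ℝ) : ℂ) *
        (((m - k : ℕ) : ℂ) * z ^ (m - k - 1)) * w ^ (p + 1 - k)) z := by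
    unfold Zc
    apply HasDerivAt.fun_sum
    intro k _
    exact ((hasDerivAt_pow (m - k) z).const_mul _).mul_const _
  rw [hD.deriv, Finset.mul_sum]
  simp only [hd]
  unfold Zc
  rw [Nat.add_sub_cancel, Finset.sum_range_succ, Finset.sum_range_succ _ (p + 1), mul_add,
    Finset.mul_sum, Finset.mul_sum, add_sub_right_comm, ← Finset.sum_sub_distrib]
  congr 1
  · apply Finset.sum_congr rfl
    intro k hk
    have hk' : k ≤ p := by have := Finset.mem_range.mp hk; omega
    obtain ⟨j, rfl⟩ := Nat.exists_eq_add_of_le hk'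
    have e1 : k + j + 1 - k = j + 1 := by omega
    have e2 : k + j - k = j := by omega
    rw [e1, e2, Nat.cast_sub (by omega : k ≤ m), Nat.factorial_succ]
    have hj : (j : ℂ) + 1 ≠ 0 := Nat.cast_add_one_ne_zero j
    generalize poch (β + 1) (m - k) = P
    generalize z ^ (m - k) = Z
    have hkf : (k.factorial : ℂ) ≠ 0 := by exact_mod_cast k.factorial_ne_zero
    have hjf : (j.factorial : ℂ) ≠ 0 := by exact_mod_cast j.factorial_ne_zero
    push_cast
    by_cases hP : (P : ℂ) = 0
    · simp [hP]
    · field_simp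
      ring
  · rw [Nat.cast_sub hmn]
    push_cast
    ring
end
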